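/- For any p, q ∈ P_n, any coupling M ∈ C(p,q), and any α ∈ (0,1) ∪ (1,∞), it holds that H_α(M) ≥ H_α(p ∧ q), where H_α denotes the Rényi entropy of order α. -/

import Mathlib

/-!
The vector of entries of `M` is majorized by `z = p ∧ q`: any `k` entries of `M` lie in at most
`k` rows, so they add up to at most the sum of the `k` largest `pᵢ`, and likewise for columns and
`q`; hence their sum is at most the `k`-th prefix sum of `z`
(`sum_coupling_le_prefSum`, `prefSum_glbVec`).

It remains to see that the Rényi entropy is Schur-concave. Truncating at level `t ≥ 0`,
majorization gives `∑ min (zᵢ, t) ≤ ∑ min (Mᵢⱼ, t)` (`sum_min_le_sum_min`). For `x ∈ [0, 1]`,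
`∫₀¹ t ^ (α - 2) * min (x, t) dt = (α x - x ^ α) / (α (α - 1))` (`integral_rpow_mul_min`), so
integrating the truncated inequality against `t ^ (α - 2)` yields
`∑ zᵢ ^ α ≤ ∑ Mᵢⱼ ^ α` when `α < 1` and the reverse inequality when `α > 1`
(`rpow_sum_compare`). In both cases, taking logarithms and dividing by `1 - α` gives the claim.
No rearrangement of the entries of `M` is needed.
-/

open Finset

/-- Sum of the first `i` components (0-indexed) of a vector; for `i ≥ n` this is the total
sum, which implements zero padding. -/
noncomputable def prefSum {n : ℕ} (p : Fin n → ℝ) (i : ℕ) : ℝ :=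
  ∑ k : Fin n, if (k : ℕ) < i then p k else 0

/-- Membership in `P_n`: sorted non-increasingly, nonnegative components, summing to 1. -/
def IsProbVec {n : ℕ} (p : Fin n → ℝ) : Prop :=
  (∀ i j : Fin n, i ≤ j → p j ≤ p i) ∧ (∀ i, 0 ≤ p i) ∧ (∑ i, p i) = 1

/-- Majorization `p ≼ q` (the shorter vector being padded with zeros). -/
def Maj {n m : ℕ} (p : Fin n → ℝ) (q : Fin m → ℝ) : Prop :=
  ∀ i : ℕ, prefSum p i ≤ prefSum q i
/-- The greatest lower bound `p ∧ q` in the majorization lattice `(P_n, ≼)`: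
`z₁ = min (p₁, q₁)` and `zᵢ = min (∑_{j≤i} pⱼ, ∑_{j≤i} qⱼ) − ∑_{j<i} zⱼ`, i.e. its prefix
sums are the minima of the corresponding prefix sums of `p` and `q`. -/
noncomputable def glbVec {n : ℕ} (p q : Fin n → ℝ) : Fin n → ℝ :=
  fun i => min (prefSum p ((i : ℕ) + 1)) (prefSum q ((i : ℕ) + 1)) -
    min (prefSum p (i : ℕ)) (prefSum q (i : ℕ))
/-- `M ∈ C(p,q)`: a coupling of `p` and `q`. -/
def IsCoupling {n m : ℕ} (M : Fin n → Fin m → ℝ) (p : Fin n → ℝ) (q : Fin m → ℝ) : Prop :=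
  (∀ i j, 0 ≤ M i j) ∧ (∀ i, (∑ j, M i j) = p i) ∧ (∀ j, (∑ i, M i j) = q j)

/-- Shannon entropy of the vector of entries of a matrix. -/
noncomputable def H2mat {n m : ℕ} (M : Fin n → Fin m → ℝ) : ℝ :=
  ∑ i, ∑ j, -(M i j * Real.logb 2 (M i j))
/-- Rényi entropy of order `α` (base-2 logarithm): `H_α(x) = (1/(1-α)) log₂ ∑ i, x i ^ α`. -/
noncomputable def Renyi (α : ℝ) {n : ℕ} (p : Fin n → ℝ) : ℝ :=
  (1 / (1 - α)) * Real.logb 2 (∑ i, p i ^ α)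

/-- Rényi entropy of order `α` of the vector of entries of a matrix. -/
noncomputable def RenyiMat (α : ℝ) {n m : ℕ} (M : Fin n → Fin m → ℝ) : ℝ :=
  (1 / (1 - α)) * Real.logb 2 (∑ i, ∑ j, M i j ^ α)

lemma prefSum_succ {n : ℕ} (p : Fin n → ℝ) (k : ℕ) :
    prefSum p (k + 1) = prefSum p k + if h : k < n then p ⟨k, h⟩ else 0 := by
  unfold prefSum
  have h1 : ∀ i : Fin n, (if (i : ℕ) < k + 1 then p i else 0)
      = (if (i : ℕ) < k then p i else 0) + (if (i : ℕ) = k then p i else 0) := by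
    intro i
    rcases lt_trichotomy (i : ℕ) k with h | h | h
    · rw [if_pos (by omega), if_pos h, if_neg (by omega), add_zero]
    · rw [if_pos (by omega), if_neg (by omega), if_pos h, zero_add]
    · rw [if_neg (by omega), if_neg (by omega), if_neg (by omega), add_zero]
  rw [Finset.sum_congr rfl (fun i _ => h1 i), Finset.sum_add_distrib]
  congr 1
  split_ifs with h
  · rw [Finset.sum_eq_single (⟨k, h⟩ : Fin n)]
    · simp
    · intro b _ hb
      rw [if_neg]
      intro hbk
      exact hb (Fin.ext hbk)
    · simp
  · apply Finset.sum_eq_zero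
    intro i _
    rw [if_neg]
    have := i.2
    omega

lemma prefSum_zero {n : ℕ} (p : Fin n → ℝ) : prefSum p 0 = 0 := by
  simp [prefSum]

lemma prefSum_top {n : ℕ} (p : Fin n → ℝ) : prefSum p n = ∑ i, p i := by
  simp [prefSum]

lemma prefSum_mono {n : ℕ} {p : Fin n → ℝ} (hp : ∀ i, 0 ≤ p i) : Monotone (prefSum p) := by
  apply monotone_nat_of_le_succ
  intro k
  rw [prefSum_succ]
  split_ifs
  · linarith [hp ⟨k, by assumption⟩]
  · linarith

lemma prefSum_glbVec {n : ℕ} (p q : Fin n → ℝ) (k : ℕ) :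
    prefSum (glbVec p q) k = min (prefSum p k) (prefSum q k) := by
  induction k with
  | zero => simp [prefSum_zero]
  | succ k ih =>
    rw [prefSum_succ, ih]
    split_ifs with h
    · simp [glbVec]
    · simp [prefSum_succ, h]

lemma glbVec_nonneg {n : ℕ} {p q : Fin n → ℝ} (hp : ∀ i, 0 ≤ p i) (hq : ∀ i, 0 ≤ q i)
    (i : Fin n) : 0 ≤ glbVec p q i :=
  sub_nonneg.2 (min_le_min (prefSum_mono hp (Nat.le_succ _)) (prefSum_mono hq (Nat.le_succ _)))

lemma sum_glbVec {n : ℕ} {p q : Fin n → ℝ} (hp : ∑ i, p i = 1) (hq : ∑ i, q i = 1) :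
    ∑ i, glbVec p q i = 1 := by
  rw [← prefSum_top, prefSum_glbVec, prefSum_top, prefSum_top, hp, hq, min_self]

/-- In a sorted vector the prefix sums are the largest sums of a given number of components. -/
lemma sum_le_prefSum_card {n : ℕ} {p : Fin n → ℝ} (hp : ∀ i j : Fin n, i ≤ j → p j ≤ p i)
    (R : Finset (Fin n)) : ∑ i ∈ R, p i ≤ prefSum p R.card := by
  induction R using Finset.induction_on_max with
  | empty => simp [prefSum_zero]
  | insert a s hs ih =>
    have ha : a ∉ s := fun h => lt_irrefl _ (hs a h)
    -- `s` lies strictly below `a`, so it has at most `a` elements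
    have hc : s.card ≤ a := by
      have : s ⊆ Finset.Iio a := fun x hx => Finset.mem_Iio.2 (hs x hx)
      simpa using Finset.card_le_card this
    have hn : s.card < n := lt_of_le_of_lt hc a.2
    rw [Finset.sum_insert ha, Finset.card_insert_of_notMem ha, prefSum_succ, dif_pos hn]
    have := hp ⟨s.card, hn⟩ a hc
    linarith

/-- A set of `k` entries of a nonnegative array meets at most `k` rows, so its sum is at most the
`k`-th prefix sum of the sorted vector of row sums. -/
lemma sum_entries_le_prefSum {n : ℕ} {p : Fin n → ℝ} (hp : IsProbVec p)
    {M : Fin n → Fin n → ℝ} (h0 : ∀ i j, 0 ≤ M i j) (hrow : ∀ i, ∑ j, M i j = p i)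
    (S : Finset (Fin n × Fin n)) : ∑ e ∈ S, M e.1 e.2 ≤ prefSum p S.card := by
  calc ∑ e ∈ S, M e.1 e.2
      ≤ ∑ e ∈ (S.image Prod.fst) ×ˢ Finset.univ, M e.1 e.2 := by
        apply Finset.sum_le_sum_of_subset_of_nonneg
        · intro e he
          simpa using ⟨e.2, he⟩
        · intro e _ _
          exact h0 _ _
    _ = ∑ i ∈ S.image Prod.fst, p i := by
        rw [Finset.sum_product]
        exact Finset.sum_congr rfl (fun i _ => hrow i)
    _ ≤ prefSum p (S.image Prod.fst).card := sum_le_prefSum_card hp.1 _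
    _ ≤ prefSum p S.card := prefSum_mono hp.2.1 Finset.card_image_le

/-- The entries of a coupling of `p` and `q` are majorized by `p ∧ q`. -/
lemma sum_coupling_le_prefSum {n : ℕ} {p q : Fin n → ℝ} (hp : IsProbVec p) (hq : IsProbVec q)
    {M : Fin n → Fin n → ℝ} (hM : IsCoupling M p q) (S : Finset (Fin n × Fin n)) :
    ∑ e ∈ S, M e.1 e.2 ≤ prefSum (glbVec p q) S.card := by
  rw [prefSum_glbVec]
  apply le_min (sum_entries_le_prefSum hp hM.1 hM.2.1 S)
  have h := sum_entries_le_prefSum hq (M := fun i j => M j i) (fun i j => hM.1 j i) hM.2.2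
    (S.map (Equiv.prodComm _ _).toEmbedding)
  simpa using h

/-- Majorization implies the comparison of sums truncated at level `t`. -/
lemma sum_min_le_sum_min {ι : Type*} [Fintype ι] {n : ℕ} {a : ι → ℝ} {b : Fin n → ℝ}
    (hsum : ∑ i, b i = ∑ e, a e) (hmaj : ∀ S : Finset ι, ∑ e ∈ S, a e ≤ prefSum b S.card)
    {t : ℝ} (ht : 0 ≤ t) : ∑ i, min (b i) t ≤ ∑ e, min (a e) t := by
  classical
  -- the extremal index set consists of the components that exceed `t`
  set S : Finset ι := Finset.univ.filter (fun e => t < a e) with hS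
  have h1 : ∑ e, min (a e) t = S.card * t + ∑ e, a e - ∑ e ∈ S, a e := by
    have : ∀ e, min (a e) t = (if t < a e then t else 0) + a e - (if t < a e then a e else 0) := by
      intro e
      split_ifs with h
      · rw [min_eq_right h.le]; ring
      · rw [min_eq_left (not_lt.1 h)]; ring
    rw [Finset.sum_congr rfl (fun e _ => this e), Finset.sum_sub_distrib, Finset.sum_add_distrib,
      ← Finset.sum_filter, ← Finset.sum_filter, Finset.sum_const, nsmul_eq_mul]
  have h2 : ∑ i, min (b i) t ≤ prefSum (fun _ : Fin n => t) S.card + ∑ i, b i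
      - prefSum b S.card := by
    unfold prefSum
    rw [← Finset.sum_add_distrib, ← Finset.sum_sub_distrib]
    apply Finset.sum_le_sum
    intro i _
    split_ifs
    · linarith [min_le_right (b i) t]
    · linarith [min_le_left (b i) t]
  have h3 : ∀ k : ℕ, prefSum (fun _ : Fin n => t) k ≤ k * t := by
    intro k
    induction k with
    | zero => simp [prefSum_zero]
    | succ k ih =>
      rw [prefSum_succ]
      push_cast
      split_ifs <;> linarith
  linarith [h3 S.card, hmaj S]

/-- Integral representation of `x ^ α` on `[0, 1]`, up to an affine term, as a mixture of the
truncations `min x t`. The formula has the same shape for `α < 1` and `1 < α`. -/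
lemma integral_rpow_mul_min {α : ℝ} (hα : 0 < α) (hα1 : α ≠ 1) {x : ℝ} (hx0 : 0 ≤ x)
    (hx1 : x ≤ 1) :
    IntervalIntegrable (fun t : ℝ => t ^ (α - 2) * min x t) MeasureTheory.volume 0 1 ∧
      ∫ t in (0 : ℝ)..1, t ^ (α - 2) * min x t = (α * x - x ^ α) / (α * (α - 1)) := by
  have hα1' : α - 1 ≠ 0 := sub_ne_zero.2 hα1
  rcases hx0.eq_or_lt with rfl | hx
  · have h : Set.EqOn (fun _ : ℝ => (0 : ℝ)) (fun t : ℝ => t ^ (α - 2) * min 0 t)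
        (Set.uIoc 0 1) := by
      intro t ht
      rw [Set.uIoc_of_le zero_le_one] at ht
      simp [ht.1.le]
    refine ⟨IntervalIntegrable.congr h (by simp), ?_⟩
    rw [← intervalIntegral.integral_congr_ae (.of_forall h)]
    simp [Real.zero_rpow hα.ne']
  · -- on `(0, x]` the integrand is `t ^ (α - 1)`, on `(x, 1]` it is `x * t ^ (α - 2)`
    have e1 : Set.EqOn (fun t : ℝ => t ^ (α - 1)) (fun t : ℝ => t ^ (α - 2) * min x t)
        (Set.uIoc 0 x) := by
      intro t ht
      rw [Set.uIoc_of_le hx0] at ht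
      simp only
      rw [min_eq_right ht.2, ← Real.rpow_add_one ht.1.ne']
      congr 1
      ring
    have e2 : Set.EqOn (fun t : ℝ => x * t ^ (α - 2)) (fun t : ℝ => t ^ (α - 2) * min x t)
        (Set.uIoc x 1) := by
      intro t ht
      rw [Set.uIoc_of_le hx1] at ht
      simp only
      rw [min_eq_left ht.1.le, mul_comm]
    have h0 : (0 : ℝ) ∉ Set.uIcc x 1 := by
      rw [Set.uIcc_of_le hx1]
      exact fun h => absurd h.1 (not_le.2 hx)
    have i1 := (intervalIntegral.intervalIntegrable_rpow' (a := 0) (b := x)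
      (r := α - 1) (by linarith)).congr e1
    have i2 := ((intervalIntegral.intervalIntegrable_rpow (μ := MeasureTheory.volume)
      (r := α - 2) (Or.inr h0)).const_mul x).congr e2
    refine ⟨i1.trans i2, ?_⟩
    rw [← intervalIntegral.integral_add_adjacent_intervals i1 i2,
      ← intervalIntegral.integral_congr_ae (.of_forall e1), ← intervalIntegral.integral_congr_ae (.of_forall e2),
      intervalIntegral.integral_const_mul, integral_rpow (Or.inl (by linarith)),
      integral_rpow (Or.inr ⟨fun h => hα1 (by linarith), h0⟩)]
    have e3 : x ^ (α - 2 + 1) = x ^ α / x := by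
      rw [← Real.rpow_sub_one hx.ne']
      congr 1
      ring
    have e4 : α - 2 + 1 = α - 1 := by ring
    rw [e3, e4, sub_add_cancel, Real.one_rpow, Real.zero_rpow hα.ne']
    field_simp
    ring

/-- Schur-monotonicity of power sums: if `a` is majorized by `b`, then `∑ bᵢ ^ α - ∑ aₑ ^ α` has
the sign of `α - 1`, or vanishes. -/
lemma rpow_sum_compare {ι : Type*} [Fintype ι] {n : ℕ} {a : ι → ℝ} {b : Fin n → ℝ}
    (ha0 : ∀ e, 0 ≤ a e) (hb0 : ∀ i, 0 ≤ b i) (ha : ∑ e, a e = 1) (hb : ∑ i, b i = 1)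
    (hmaj : ∀ S : Finset ι, ∑ e ∈ S, a e ≤ prefSum b S.card)
    {α : ℝ} (hα : 0 < α) (hα1 : α ≠ 1) :
    0 ≤ (∑ i, b i ^ α - ∑ e, a e ^ α) / (α * (α - 1)) := by
  have ha1 : ∀ e, a e ≤ 1 := fun e =>
    ha ▸ Finset.single_le_sum (fun e _ => ha0 e) (Finset.mem_univ e)
  have hb1 : ∀ i, b i ≤ 1 := fun i =>
    hb ▸ Finset.single_le_sum (fun i _ => hb0 i) (Finset.mem_univ i)
  have Ia := fun e => integral_rpow_mul_min hα hα1 (ha0 e) (ha1 e)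
  have Ib := fun i => integral_rpow_mul_min hα hα1 (hb0 i) (hb1 i)
  have key : ∫ t in (0 : ℝ)..1, ∑ i, t ^ (α - 2) * min (b i) t
      ≤ ∫ t in (0 : ℝ)..1, ∑ e, t ^ (α - 2) * min (a e) t := by
    apply intervalIntegral.integral_mono_on zero_le_one
    · simpa only [Finset.sum_fn] using
        IntervalIntegrable.sum Finset.univ (fun i _ => (Ib i).1)
    · simpa only [Finset.sum_fn] using
        IntervalIntegrable.sum Finset.univ (fun e _ => (Ia e).1)
    · intro t ht
      rw [← Finset.mul_sum, ← Finset.mul_sum]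
      exact mul_le_mul_of_nonneg_left (sum_min_le_sum_min (hb.trans ha.symm) hmaj ht.1)
        (Real.rpow_nonneg ht.1 _)
  rw [intervalIntegral.integral_finsetSum (fun i _ => (Ib i).1),
    intervalIntegral.integral_finsetSum (fun e _ => (Ia e).1),
    Finset.sum_congr rfl (fun i _ => (Ib i).2), Finset.sum_congr rfl (fun e _ => (Ia e).2),
    ← Finset.sum_div, ← Finset.sum_div, Finset.sum_sub_distrib, Finset.sum_sub_distrib,
    ← Finset.mul_sum, ← Finset.mul_sum, ha, hb] at key
  have := sub_nonneg.2 key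
  rw [← sub_div] at this
  convert this using 2
  ring

lemma sum_rpow_pos {ι : Type*} [Fintype ι] {a : ι → ℝ} (ha0 : ∀ e, 0 ≤ a e)
    (ha : ∑ e, a e = 1) (α : ℝ) : 0 < ∑ e, a e ^ α := by
  obtain ⟨e, he, hpos⟩ : ∃ e ∈ Finset.univ, 0 < a e :=
    Finset.exists_lt_of_sum_lt (by simp [ha])
  exact Finset.sum_pos' (fun e _ => Real.rpow_nonneg (ha0 e) _) ⟨e, he, Real.rpow_pos_of_pos hpos _⟩

/-- for any `p, q ∈ P_n`, any coupling `M ∈ C(p,q)` and any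
`α ∈ (0,1) ∪ (1,∞)`, it holds that `H_α(M) ≥ H_α(p ∧ q)`. -/
theorem renyi_coupling_ge_glb {n : ℕ} (p q : Fin n → ℝ)
    (hp : IsProbVec p) (hq : IsProbVec q)
    (M : Fin n → Fin n → ℝ) (hM : IsCoupling M p q)
    (α : ℝ) (hα : (0 < α ∧ α < 1) ∨ 1 < α) :
    RenyiMat α M ≥ Renyi α (glbVec p q) := by
  have hz0 := glbVec_nonneg hp.2.1 hq.2.1
  have hz := sum_glbVec hp.2.2 hq.2.2
  have hm0 : ∀ e : Fin n × Fin n, 0 ≤ M e.1 e.2 := fun e => hM.1 _ _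
  have hm : ∑ e : Fin n × Fin n, M e.1 e.2 = 1 := by
    rw [Fintype.sum_prod_type, ← hp.2.2]
    exact Finset.sum_congr rfl (fun i _ => hM.2.1 i)
  have hα0 : 0 < α := by rcases hα with h | h <;> linarith
  have hα1 : α ≠ 1 := by rcases hα with h | h <;> [exact h.2.ne; exact h.ne']
  have hcmp := rpow_sum_compare hm0 hz0 hm hz (sum_coupling_le_prefSum hp hq hM) hα0 hα1
  have hzpos := sum_rpow_pos hz0 hz α
  have hmpos := sum_rpow_pos hm0 hm α
  unfold RenyiMat Renyi
  rw [← Fintype.sum_prod_type (f := fun e : Fin n × Fin n => M e.1 e.2 ^ α)]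
  rcases hα with h | h
  · have hneg : α * (α - 1) < 0 := mul_neg_of_pos_of_neg hα0 (by linarith)
    have hle : ∑ i, glbVec p q i ^ α ≤ ∑ e : Fin n × Fin n, M e.1 e.2 ^ α := by
      by_contra! hlt
      exact absurd (div_neg_of_pos_of_neg (sub_pos.2 hlt) hneg) (not_lt.2 hcmp)
    exact mul_le_mul_of_nonneg_left (Real.logb_le_logb_of_le one_lt_two hzpos hle)
      (one_div_nonneg.2 (by linarith))
  · have hpos : 0 < α * (α - 1) := mul_pos hα0 (by linarith)
    have hle : ∑ e : Fin n × Fin n, M e.1 e.2 ^ α ≤ ∑ i, glbVec p q i ^ α := by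
      by_contra! hlt
      exact absurd (div_neg_of_neg_of_pos (sub_neg.2 hlt) hpos) (not_lt.2 hcmp)
    exact mul_le_mul_of_nonpos_left (Real.logb_le_logb_of_le one_lt_two hmpos hle)
      (one_div_nonpos.2 (by linarith))
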